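/- The annihilator {A ∈ so(7) : ρ₇(A)·s₅ = 0} of the unit spinor s₅ under the spin representation is exactly the linear span of the fourteen matrices G₁₆+G₃₇, G₁₆−G₂₅, G₁₅+G₂₆, G₂₆+G₄₇, G₁₇−G₃₆, G₁₇+G₄₅, G₂₇−G₃₅, G₂₇−G₄₆, G₁₂+G₃₄, G₁₂−G₅₆, G₁₃−G₂₄, G₁₃−G₆₇, G₁₄+G₂₃, G₁₄+G₅₇; in particular it has dimension 14 and is closed under the matrix commutator, i.e. it is a Lie subalgebra of so(7) (the Lie algebra g₂ stabilizing s₅). -/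

import Mathlib

/- STATEMENT 10: The annihilator {A ∈ so(7) : ρ₇(A)·s₅ = 0} of the unit spinor s₅
under the spin representation is exactly the span of the fourteen listed
matrices; in particular it has dimension 14 and is closed under the matrix
commutator (it is the Lie algebra g₂ stabilizing s₅).
(All indices 0-based: G a b = G_{a+1,b+1}, s 4 = s₅.) -/

open Matrix

namespace Stmt10

def E (i j : Fin 8) : Matrix (Fin 8) (Fin 8) ℝ :=
  Matrix.of fun k l => if k = i ∧ l = j then (-1 : ℝ) else if k = j ∧ l = i then 1 else 0

def e : Fin 7 → Matrix (Fin 8) (Fin 8) ℝ :=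
  ![E 0 7 + E 1 6 - E 2 5 - E 3 4,
    -E 0 6 + E 1 7 + E 2 4 - E 3 5,
    -E 0 5 + E 1 4 - E 2 7 + E 3 6,
    -E 0 4 - E 1 5 - E 2 6 - E 3 7,
    -E 0 2 - E 1 3 + E 4 6 + E 5 7,
    E 0 3 - E 1 2 - E 4 7 + E 5 6,
    E 0 1 - E 2 3 - E 4 5 + E 6 7]

/-- The basis `G_{ab}` of `so(7)`. -/
def G (a b : Fin 7) : Matrix (Fin 7) (Fin 7) ℝ :=
  Matrix.of fun k l => if k = a ∧ l = b then (-1 : ℝ) else if k = b ∧ l = a then 1 else 0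

/-- The differential of the spin representation `so(7) → M₈(ℝ)`: the linear map
determined by `ρ₇ (G a b) = (1/2) eₐ * e_b` for `a < b`. -/
noncomputable def ρ₇ (A : Matrix (Fin 7) (Fin 7) ℝ) : Matrix (Fin 8) (Fin 8) ℝ :=
  (4⁻¹ : ℝ) • ∑ p, ∑ q, A q p • (e p * e q)

def s (i : Fin 8) : Fin 8 → ℝ := Pi.single i 1

/-- The span of the fourteen listed generators of `g₂`. -/
def g2 : Submodule ℝ (Matrix (Fin 7) (Fin 7) ℝ) :=
  Submodule.span ℝ {G 0 5 + G 2 6, G 0 5 - G 1 4, G 0 4 + G 1 5, G 1 5 + G 3 6,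
    G 0 6 - G 2 5, G 0 6 + G 3 4, G 1 6 - G 2 4, G 1 6 - G 3 5,
    G 0 1 + G 2 3, G 0 1 - G 4 5, G 0 2 - G 1 3, G 0 2 - G 5 6,
    G 0 3 + G 1 2, G 0 3 + G 4 6}

/-!
Skew-symmetric matrices act on spinors through `ρ₇`, and the Clifford relations make this a Lie
algebra action, so the annihilator of any spinor is a Lie subalgebra of `so(n)`.

Clifford multiplication by `s₅` is injective: `x x s₅ = -|x|² s₅`. Moreover
`e_p e_q s₅ = ∑ᵣ φ_{pqr} eᵣ s₅` for `p ≠ q`, where `φ` is the associative three-form on `ℝ⁷`, so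
that `ρ₇(A) s₅ = ½ ∑ᵣ (∑_{p<q} φ_{pqr} A_{qp}) eᵣ s₅`. Hence `A` annihilates `s₅` exactly when its
contraction with `φ` vanishes. This is a system of seven equations; the 21 coordinates of `so(7)`
are distributed over them in threes, so each equation has a plane of solutions, with a basis given
by two of the fourteen generators.
-/

theorem exists_eq_sub_transpose {n R : Type*} [Ring R] [Invertible (2 : R)] {A : Matrix n n R}
    (hA : Aᵀ = -A) : ∃ B, A = B - Bᵀ :=
  ⟨(⅟2 : R) • A, by
    rw [Matrix.transpose_smul, hA, smul_neg, sub_neg_eq_add, ← add_smul, invOf_two_add_invOf_two,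
      one_smul]⟩

section CliffordSystem

open LieAlgebra.Orthogonal

variable {ι K 𝔸 M : Type*} [Field K] [Ring 𝔸] [Algebra K 𝔸]

/-- A family satisfying the Clifford relations of the negative definite form `-∑ xₚ²`, that is, the
images of an orthonormal basis under Clifford multiplication. -/
def IsCliffordSystem [DecidableEq ι] (γ : ι → 𝔸) : Prop :=
  ∀ p q, γ p * γ q + γ q * γ p = if p = q then -2 else 0

theorem IsCliffordSystem.mul_mul_sub [DecidableEq ι] {γ : ι → 𝔸} (hγ : IsCliffordSystem γ)
    (p q r : ι) :
    γ p * γ q * γ r - γ r * (γ p * γ q) =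
      (if p = r then 2 * γ q else 0) - if q = r then 2 * γ p else 0 := by
  calc γ p * γ q * γ r - γ r * (γ p * γ q)
    _ = γ p * (γ q * γ r + γ r * γ q) - (γ p * γ r + γ r * γ p) * γ q := by noncomm_ring
    _ = _ := by
      rw [hγ q r, hγ p r]
      split_ifs <;> noncomm_ring

theorem IsCliffordSystem.sum_smul_mul_self [DecidableEq ι] [NeZero (2 : K)] {γ : ι → 𝔸}
    (hγ : IsCliffordSystem γ) (t : Finset ι) (c : ι → K) :
    (∑ p ∈ t, c p • γ p) * ∑ p ∈ t, c p • γ p = -algebraMap K 𝔸 (∑ p ∈ t, c p ^ 2) := by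
  have expand : (∑ p ∈ t, c p • γ p) * ∑ p ∈ t, c p • γ p =
      ∑ p ∈ t, ∑ q ∈ t, (c p * c q) • (γ p * γ q) := by
    simp only [Finset.sum_mul_sum, smul_mul_smul_comm]
  have swap : ∑ p ∈ t, ∑ q ∈ t, (c p * c q) • (γ p * γ q) =
      ∑ p ∈ t, ∑ q ∈ t, (c p * c q) • (γ q * γ p) := by
    rw [Finset.sum_comm]
    exact Finset.sum_congr rfl fun p _ ↦ Finset.sum_congr rfl fun q _ ↦ by rw [mul_comm (c q)]
  apply smul_right_injective 𝔸 (two_ne_zero (α := K))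
  calc (2 : K) • ((∑ p ∈ t, c p • γ p) * ∑ p ∈ t, c p • γ p)
    _ = ∑ p ∈ t, ∑ q ∈ t, (c p * c q) • (γ p * γ q + γ q * γ p) := by
      simp only [smul_add, Finset.sum_add_distrib, two_smul, expand, ← swap]
    _ = (2 : K) • -algebraMap K 𝔸 (∑ p ∈ t, c p ^ 2) := by
      simp only [hγ _ _, smul_ite, smul_zero, Finset.sum_ite_eq, Finset.sum_ite_mem,
        Finset.inter_self, Algebra.algebraMap_eq_smul_one, Finset.sum_smul, smul_neg,
        Finset.sum_neg_distrib, Finset.smul_sum, pow_two, ← one_add_one_eq_two (R := 𝔸), smul_add,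
        two_smul]

theorem IsCliffordSystem.linearIndependent_smul [DecidableEq ι] [LinearOrder K]
    [IsStrictOrderedRing K] [AddCommGroup M] [Module K M] [Module 𝔸 M] [IsScalarTower K 𝔸 M]
    {γ : ι → 𝔸} (hγ : IsCliffordSystem γ) {ψ : M} (hψ : ψ ≠ 0) :
    LinearIndependent K fun p ↦ γ p • ψ := by
  rw [linearIndependent_iff']
  intro t c hc
  have vanishes : (∑ p ∈ t, c p • γ p) • ψ = 0 := by
    simpa only [Finset.sum_smul, smul_assoc] using hc
  have sq_smul : (∑ p ∈ t, c p ^ 2) • ψ = 0 := by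
    rw [← algebraMap_smul 𝔸, ← neg_eq_zero, ← neg_smul, ← hγ.sum_smul_mul_self, mul_smul, vanishes,
      smul_zero]
  have sq_sum := (smul_eq_zero.mp sq_smul).resolve_right hψ
  rw [Finset.sum_eq_zero_iff_of_nonneg fun p _ ↦ sq_nonneg (c p)] at sq_sum
  exact fun p hp ↦ pow_eq_zero_iff two_ne_zero |>.mp (sq_sum p hp)

variable [Fintype ι]

/-- The linear map `A ↦ ¼ ∑ A_{qp} γₚ γ_q`, whose restriction to skew-symmetric matrices is the spin
representation attached to a Clifford system `γ`: it sends the generator of the rotation from the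
`a`-th to the `b`-th axis to `½ γₐ γ_b`. -/
def spinMap (γ : ι → 𝔸) : Matrix ι ι K →ₗ[K] 𝔸 where
  toFun A := (4⁻¹ : K) • ∑ p, ∑ q, A q p • (γ p * γ q)
  map_add' A B := by
    simp only [Matrix.add_apply, add_smul, Finset.sum_add_distrib, smul_add]
  map_smul' c A := by
    simp only [Matrix.smul_apply, smul_assoc, ← Finset.smul_sum, smul_comm c (4⁻¹ : K),
      RingHom.id_apply]

theorem spinMap_apply (γ : ι → 𝔸) (A : Matrix ι ι K) :
    spinMap γ A = (4⁻¹ : K) • ∑ p, ∑ q, A q p • (γ p * γ q) :=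
  rfl

variable [DecidableEq ι]

attribute [local instance] LieRing.ofAssociativeRing

theorem IsCliffordSystem.spinMap_lie_apply [NeZero (2 : K)] {γ : ι → 𝔸} (hγ : IsCliffordSystem γ)
    {A : Matrix ι ι K} (hA : A ∈ so ι K) (r : ι) :
    ⁅spinMap γ A, γ r⁆ = ∑ q, A q r • γ q := by
  have skew (p q : ι) : A p q = -A q p := by
    rw [← neg_eq_iff_eq_neg, ← Matrix.neg_apply, ← (mem_so _ _ A).mp hA, Matrix.transpose_apply]
  have two_ne : (2 : K) ≠ 0 := NeZero.ne 2
  have four_inv : (4⁻¹ : K) * 2 * 2 = 1 := by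
    rw [show (4 : K) = 2 * 2 by norm_num]
    field_simp
  calc ⁅spinMap γ A, γ r⁆
    _ = (4⁻¹ : K) • ∑ p, ∑ q, A q p • (γ p * γ q * γ r - γ r * (γ p * γ q)) := by
      simp only [LieRing.of_associative_ring_bracket, spinMap_apply, smul_mul_assoc,
        mul_smul_comm, Finset.sum_mul, Finset.mul_sum, ← smul_sub, ← Finset.sum_sub_distrib]
    _ = (4⁻¹ : K) • (∑ q, (A q r * 2) • γ q - ∑ p, (A r p * 2) • γ p) := by
      simp only [hγ.mul_mul_sub, smul_sub, smul_ite, smul_zero, Finset.sum_sub_distrib,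
        Finset.sum_ite_eq', Finset.sum_ite_irrel, Finset.sum_const_zero, Finset.mem_univ, if_true,
        mul_smul, two_smul, two_mul]
    _ = ∑ q, A q r • γ q := by
      simp only [skew r, ← Finset.sum_sub_distrib, ← sub_smul, Finset.smul_sum, smul_smul]
      refine Finset.sum_congr rfl fun q _ ↦ congrArg (· • γ q) ?_
      linear_combination A q r * four_inv

theorem IsCliffordSystem.spinMap_lie [NeZero (2 : K)] {γ : ι → 𝔸} (hγ : IsCliffordSystem γ)
    {A : Matrix ι ι K} (hA : A ∈ so ι K) (B : Matrix ι ι K) :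
    spinMap γ ⁅A, B⁆ = ⁅spinMap γ A, spinMap γ B⁆ := by
  have leibniz (x y z : 𝔸) : ⁅x, y * z⁆ = ⁅x, y⁆ * z + y * ⁅x, z⁆ := by
    simp only [LieRing.of_associative_ring_bracket]
    noncomm_ring
  symm
  calc ⁅spinMap γ A, spinMap γ B⁆
    _ = (4⁻¹ : K) • ∑ p, ∑ q, B q p • ⁅spinMap γ A, γ p * γ q⁆ := by
      simp only [spinMap_apply γ B, LieRing.of_associative_ring_bracket, smul_mul_assoc,
        mul_smul_comm, Finset.sum_mul, Finset.mul_sum, ← smul_sub, ← Finset.sum_sub_distrib]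
    _ = (4⁻¹ : K) • (∑ p, ∑ q, ∑ k, (B q p * A k p) • (γ k * γ q) +
          ∑ p, ∑ q, ∑ k, (A k q * B q p) • (γ p * γ k)) := by
      simp only [leibniz, hγ.spinMap_lie_apply hA, Finset.sum_mul, Finset.mul_sum, smul_add,
        Finset.smul_sum, Finset.sum_add_distrib, smul_mul_assoc, mul_smul_comm, smul_smul,
        mul_comm (A _ _)]
    _ = spinMap γ (B * Aᵀ) + spinMap γ (A * B) := by
      rw [smul_add, spinMap_apply, spinMap_apply]
      simp only [Matrix.mul_apply, Matrix.transpose_apply, Finset.sum_smul]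
      congr 2
      · rw [Finset.sum_comm_cycle]
        exact Finset.sum_congr rfl fun k _ ↦ Finset.sum_comm
      · exact Finset.sum_congr rfl fun p _ ↦ Finset.sum_comm
    _ = spinMap γ ⁅A, B⁆ := by
      rw [(mem_so _ _ A).mp hA, ← map_add, mul_neg, neg_add_eq_sub,
        LieRing.of_associative_ring_bracket]

variable [NeZero (2 : K)] [AddCommGroup M] [Module K M] [Module 𝔸 M]
    [IsScalarTower K 𝔸 M] {γ : ι → 𝔸} (hγ : IsCliffordSystem γ)

/-- The stabilizer of a spinor `ψ` in `so(n)`, where `so(n)` acts through the spin representation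
attached to the Clifford system `γ`. -/
def spinorAnnihilator (ψ : M) : LieSubalgebra K (Matrix ι ι K) where
  __ := (so ι K).toSubmodule ⊓
    ((LinearMap.toSpanSingleton 𝔸 M ψ).restrictScalars K ∘ₗ spinMap γ).ker
  lie_mem' := by
    rintro A B ⟨hA, hAψ⟩ ⟨hB, hBψ⟩
    refine ⟨(so ι K).lie_mem hA hB, ?_⟩
    simp only [SetLike.mem_coe, LinearMap.mem_ker, LinearMap.comp_apply,
      LinearMap.restrictScalars_apply, LinearMap.toSpanSingleton_apply] at hAψ hBψ ⊢
    rw [hγ.spinMap_lie hA, LieRing.of_associative_ring_bracket, sub_smul, mul_smul, mul_smul, hAψ,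
      hBψ, smul_zero, smul_zero, sub_zero]

theorem mem_spinorAnnihilator {ψ : M} {A : Matrix ι ι K} :
    A ∈ spinorAnnihilator hγ ψ ↔ Aᵀ = -A ∧ spinMap γ A • ψ = 0 :=
  and_congr_left' (mem_so _ _ A)

theorem commutator_mem_spinorAnnihilator {ψ : M} {A B : Matrix ι ι K}
    (hA : A ∈ spinorAnnihilator hγ ψ) (hB : B ∈ spinorAnnihilator hγ ψ) :
    A * B - B * A ∈ spinorAnnihilator hγ ψ :=
  (spinorAnnihilator hγ ψ).lie_mem hA hB

end CliffordSystem

theorem E_mulVec {i j : Fin 8} (hij : i ≠ j) (x : Fin 8 → ℝ) :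
    E i j *ᵥ x = x i • s j - x j • s i := by
  have entries : E i j = Matrix.single j i 1 - Matrix.single i j 1 := by
    ext k l
    simp only [E, Matrix.of_apply, Matrix.sub_apply, Matrix.single_apply]
    grind
  rw [entries, Matrix.sub_mulVec, Matrix.single_mulVec, Matrix.single_mulVec]
  ext k
  simp [s, Pi.single_apply, Function.update_apply]

theorem e_mulVec (p : Fin 7) (x : Fin 8 → ℝ) :
    e p *ᵥ x =
      ![![-x 7, -x 6, x 5, x 4, -x 3, -x 2, x 1, x 0],
        ![x 6, -x 7, -x 4, x 5, x 2, -x 3, -x 0, x 1],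
        ![x 5, -x 4, x 7, -x 6, x 1, -x 0, x 3, -x 2],
        ![x 4, x 5, x 6, x 7, -x 0, -x 1, -x 2, -x 3],
        ![x 2, x 3, -x 0, -x 1, -x 6, -x 7, x 4, x 5],
        ![-x 3, x 2, -x 1, x 0, x 7, -x 6, x 5, -x 4],
        ![-x 1, x 0, x 3, -x 2, x 5, -x 4, -x 7, x 6]] p := by
  ext k
  fin_cases p <;> fin_cases k <;>
    simp [e, s, Matrix.add_mulVec, Matrix.sub_mulVec, Matrix.neg_mulVec, E_mulVec]

theorem isCliffordSystem_e : IsCliffordSystem e := by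
  intro p q
  refine Matrix.ext_iff_mulVec.mpr fun x ↦ ?_
  rw [Matrix.add_mulVec, ← Matrix.mulVec_mulVec, ← Matrix.mulVec_mulVec]
  have ite_mulVec : (if p = q then -2 else 0 : Matrix (Fin 8) (Fin 8) ℝ) *ᵥ x =
      (if p = q then -2 else 0 : ℝ) • x := by
    split_ifs <;> simp [Matrix.neg_mulVec, Matrix.ofNat_mulVec]
  rw [ite_mulVec]
  ext k
  fin_cases p <;> fin_cases q <;> fin_cases k <;> simp [e_mulVec] <;> ring

/-- Twice the coordinates of `ρ₇(A) s₅` in the basis `eᵣ s₅` of `s₅^⊥`, for skew-symmetric `A`. It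
is the contraction `∑_{p<q} φ_{pqr} A_{qp}` of `A` with the associative three-form `φ` determined by
`e_p e_q s₅ = ∑ᵣ φ_{pqr} eᵣ s₅` for `p ≠ q`. -/
def associativeContraction (A : Matrix (Fin 7) (Fin 7) ℝ) : Fin 7 → ℝ :=
  ![-A 6 1 - A 4 2 - A 5 3,
    A 6 0 + A 5 2 - A 4 3,
    A 4 0 - A 5 1 + A 6 3,
    A 5 0 + A 4 1 - A 6 2,
    -A 2 0 - A 3 1 - A 6 5,
    -A 3 0 + A 2 1 + A 6 4,
    -A 1 0 + A 3 2 - A 5 4]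

theorem sum_smul_e_mulVec_s (a : Fin 7 → ℝ) :
    ∑ q, a q • (e q *ᵥ s 4) = ![a 3, -a 2, -a 1, a 0, 0, -a 6, a 4, -a 5] := by
  simp only [e_mulVec]
  ext k
  fin_cases k <;> simp [s, Fin.sum_univ_succ]

theorem ρ₇_mulVec_s {A : Matrix (Fin 7) (Fin 7) ℝ} (hA : Aᵀ = -A) :
    ρ₇ A *ᵥ s 4 = (2⁻¹ : ℝ) • ∑ r, associativeContraction A r • (e r *ᵥ s 4) := by
  obtain ⟨B, rfl⟩ := exists_eq_sub_transpose hA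
  have by_columns (A : Matrix (Fin 7) (Fin 7) ℝ) :
      ρ₇ A *ᵥ s 4 = (4⁻¹ : ℝ) • ∑ p, e p *ᵥ ∑ q, A q p • (e q *ᵥ s 4) := by
    simp only [ρ₇, Matrix.smul_mulVec, Matrix.sum_mulVec, ← Matrix.mulVec_mulVec,
      Matrix.mulVec_smul, Matrix.mulVec_sum]
  rw [by_columns]
  simp only [sum_smul_e_mulVec_s]
  simp only [e_mulVec]
  ext k
  fin_cases k <;> simp [associativeContraction, Fin.sum_univ_succ] <;> ring

theorem ρ₇_mulVec_s_eq_zero_iff {A : Matrix (Fin 7) (Fin 7) ℝ} (hA : Aᵀ = -A) :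
    ρ₇ A *ᵥ s 4 = 0 ↔ associativeContraction A = 0 := by
  have s_ne_zero : s 4 ≠ 0 := Pi.single_ne_zero_iff.mpr one_ne_zero
  have indep := isCliffordSystem_e.linearIndependent_smul (K := ℝ) s_ne_zero
  rw [ρ₇_mulVec_s hA, smul_eq_zero_iff_right (by norm_num)]
  refine ⟨fun h ↦ funext (Fintype.linearIndependent_iff.mp indep _ h), fun h ↦ ?_⟩
  simp only [h, Pi.zero_apply, zero_smul, Finset.sum_const_zero]

/-- The generators of `g2` as a family, in the order in which they are listed there. -/
def g2Generator : Fin 14 → Matrix (Fin 7) (Fin 7) ℝ :=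
  ![G 0 5 + G 2 6, G 0 5 - G 1 4, G 0 4 + G 1 5, G 1 5 + G 3 6,
    G 0 6 - G 2 5, G 0 6 + G 3 4, G 1 6 - G 2 4, G 1 6 - G 3 5,
    G 0 1 + G 2 3, G 0 1 - G 4 5, G 0 2 - G 1 3, G 0 2 - G 5 6,
    G 0 3 + G 1 2, G 0 3 + G 4 6]

/-- The coefficients of an element of `g2` with respect to `g2Generator`: each generator contains,
up to sign, a basis matrix `G a b` that occurs in no other generator. -/
def g2Coord (A : Matrix (Fin 7) (Fin 7) ℝ) : Fin 14 → ℝ :=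
  ![A 6 2, -A 4 1, A 4 0, A 6 3, -A 5 2, A 4 3, -A 4 2,
    -A 5 3, A 3 2, -A 5 4, -A 3 1, -A 6 5, A 2 1, A 6 4]

theorem sum_smul_g2Generator (c : Fin 14 → ℝ) :
    ∑ i, c i • g2Generator i =
      !![0, -c 8 - c 9, -c 10 - c 11, -c 12 - c 13, -c 2, -c 0 - c 1, -c 4 - c 5;
        c 8 + c 9, 0, -c 12, c 10, c 1, -c 2 - c 3, -c 6 - c 7;
        c 10 + c 11, c 12, 0, -c 8, c 6, c 4, -c 0;
        c 12 + c 13, -c 10, c 8, 0, -c 5, c 7, -c 3;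
        c 2, -c 1, -c 6, c 5, 0, c 9, -c 13;
        c 0 + c 1, c 2 + c 3, -c 4, -c 7, -c 9, 0, c 11;
        c 4 + c 5, c 6 + c 7, c 0, c 3, c 13, -c 11, 0] := by
  ext k l
  simp only [Matrix.sum_apply, Matrix.smul_apply, Fin.sum_univ_succ]
  fin_cases k <;> fin_cases l <;> simp [g2Generator, G] <;> ring

theorem g2Coord_sum_smul_g2Generator (c : Fin 14 → ℝ) :
    g2Coord (∑ i, c i • g2Generator i) = c := by
  rw [sum_smul_g2Generator]
  ext i
  fin_cases i <;> simp [g2Coord]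

theorem linearIndependent_g2Generator : LinearIndependent ℝ g2Generator := by
  refine Fintype.linearIndependent_iff.mpr fun c hc ↦ congrFun ?_
  calc c = g2Coord (∑ i, c i • g2Generator i) := (g2Coord_sum_smul_g2Generator c).symm
    _ = 0 := by
      rw [hc]
      ext i
      fin_cases i <;> simp [g2Coord]

theorem g2_eq_span_range : g2 = Submodule.span ℝ (Set.range g2Generator) := by
  simp only [g2, g2Generator, Matrix.range_cons, Matrix.range_empty, Set.union_empty,
    Set.singleton_union]

theorem finrank_g2 : Module.finrank ℝ g2 = 14 := by
  rw [g2_eq_span_range, finrank_span_eq_card linearIndependent_g2Generator, Fintype.card_fin]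

theorem transpose_G {a b : Fin 7} (hab : a ≠ b) : (G a b)ᵀ = -G a b := by
  ext k l
  simp only [G, Matrix.transpose_apply, Matrix.of_apply, Matrix.neg_apply]
  grind

theorem transpose_g2Generator (i : Fin 14) : (g2Generator i)ᵀ = -g2Generator i := by
  fin_cases i <;> simp [g2Generator, transpose_G, add_comm, sub_eq_add_neg]

theorem associativeContraction_sum_smul_g2Generator (c : Fin 14 → ℝ) :
    associativeContraction (∑ i, c i • g2Generator i) = 0 := by
  rw [sum_smul_g2Generator]
  ext r
  fin_cases r <;> simp [associativeContraction]

theorem sum_g2Coord_smul_g2Generator {A : Matrix (Fin 7) (Fin 7) ℝ} (hA : Aᵀ = -A)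
    (h : associativeContraction A = 0) : ∑ i, g2Coord A i • g2Generator i = A := by
  obtain ⟨B, rfl⟩ := exists_eq_sub_transpose hA
  simp only [associativeContraction, Matrix.cons_eq_zero_iff, Matrix.sub_apply,
    Matrix.transpose_apply] at h
  obtain ⟨h₀, h₁, h₂, h₃, h₄, h₅, h₆, -⟩ := h
  rw [sum_smul_g2Generator]
  ext k l
  fin_cases k <;> fin_cases l <;> simp [g2Coord] <;> linarith

theorem mem_g2_iff {A : Matrix (Fin 7) (Fin 7) ℝ} :
    A ∈ g2 ↔ Aᵀ = -A ∧ associativeContraction A = 0 := by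
  rw [g2_eq_span_range, Submodule.mem_span_range_iff_exists_fun]
  refine ⟨?_, fun ⟨skew, contraction⟩ ↦ ⟨_, sum_g2Coord_smul_g2Generator skew contraction⟩⟩
  rintro ⟨c, rfl⟩
  refine ⟨?_, associativeContraction_sum_smul_g2Generator c⟩
  simp only [Matrix.transpose_sum, Matrix.transpose_smul, transpose_g2Generator, smul_neg,
    Finset.sum_neg_distrib]

theorem mem_g2_iff_mem_spinorAnnihilator {A : Matrix (Fin 7) (Fin 7) ℝ} :
    A ∈ g2 ↔ A ∈ spinorAnnihilator (K := ℝ) isCliffordSystem_e (s 4) :=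
  mem_g2_iff.trans <| (and_congr_right fun hA ↦ (ρ₇_mulVec_s_eq_zero_iff hA).symm).trans
    (mem_spinorAnnihilator isCliffordSystem_e).symm

theorem annihilator_is_g2 :
    {A : Matrix (Fin 7) (Fin 7) ℝ | Aᵀ = -A ∧ (ρ₇ A).mulVec (s 4) = 0} = ↑g2 ∧
    Module.finrank ℝ ↥g2 = 14 ∧
    (∀ A ∈ g2, ∀ B ∈ g2, A * B - B * A ∈ g2) := by
  refine ⟨?_, finrank_g2, ?_⟩
  · ext A
    exact (mem_spinorAnnihilator isCliffordSystem_e).symm.trans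
      mem_g2_iff_mem_spinorAnnihilator.symm
  · simp only [mem_g2_iff_mem_spinorAnnihilator]
    exact fun A hA B hB ↦ commutator_mem_spinorAnnihilator isCliffordSystem_e hA hB

end Stmt10
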